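/- Let L_β(s, v, θ) := L₀(s, v, θ) + β c(s) be an augmented Lagrangian with smooth L₀ and cost c depending only on position. Suppose (β, θ) ↦ s^β(θ) is a smooth family of curves on [0,T] each solving the Euler-Lagrange equation for L_β, and suppose the boundary values satisfy: (i) s^β_0(θ) = α and ṡ^β_0(θ) = γ independent of (β, θ) fails, but instead (ii) s^β_T(θ) and ṡ^β_T(θ) are independent of β, and (iii) s^0_0(θ) and ṡ^0_0(θ) are independent of θ. Then the gradient of the cost C(θ) = ∫₀ᵀ c(s^0_t(θ)) dt satisfies d_θ C(θ) = lim_{β→0} (1/β)[ ∫₀ᵀ (∂_θ L_β(s^β_t, ṡ^β_t, θ) - ∂_θ L₀(s^0_t, ṡ^0_t, θ)) dt + (∂_{θ,ṡ} L₀(s^0_0, ṡ^0_0, θ))ᵀ (s^β_0 - s^0_0) ]. -/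

import Mathlib

open scoped RealInnerProductSpace Topology

/-!
Along a family of solutions of the Euler-Lagrange equation, the first variation of the action
reduces to its explicit parameter derivative plus the boundary term `p · ∂s`, with `p` the momentum
`∂ᵥL`. Symmetry of the second derivative of the action then makes `∂ₓ ∫ ∂_y L + [∂ₓ p · ∂_y s]`
symmetric in any two parameter directions. Apply this to the directions `β` and `θ`, where
`∂_β L_β = c`: at the final time `∂_β s` and `∂_β p` vanish, at the initial time `∂_θ s` vanishes,
and what remains is `d_θ ∫ c = ∂_β ∫ ∂_θ L₀ + ∂_θ p · ∂_β s`, the last term taken at the initial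
time. The estimator is the difference quotient at `β = 0` of the right-hand side.
-/

section Calculus

variable {E F G H K : Type*} [NormedAddCommGroup E] [NormedSpace ℝ E]
  [NormedAddCommGroup F] [NormedSpace ℝ F] [NormedAddCommGroup G] [NormedSpace ℝ G]
  [NormedAddCommGroup H] [NormedSpace ℝ H]
  [NormedAddCommGroup K] [NormedSpace ℝ K]

lemma hasFDerivAt_curry_left {f : E → F → G} {f' : E × F →L[ℝ] G} {x : E} {y : F}
    (hf : HasFDerivAt ↿f f' (x, y)) : HasFDerivAt (f · y) (f' ∘L .inl ℝ E F) x :=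
  hf.comp (f := (·, y)) x (hasFDerivAt_prodMk_left x y)

lemma hasFDerivAt_curry_right {f : E → F → G} {f' : E × F →L[ℝ] G} {x : E} {y : F}
    (hf : HasFDerivAt ↿f f' (x, y)) : HasFDerivAt (f x) (f' ∘L .inr ℝ E F) y :=
  hf.comp y (hasFDerivAt_prodMk_right x y)

lemma hasDerivAt_curry_left {f : ℝ → F → G} {f' : ℝ × F →L[ℝ] G} {x : ℝ} {y : F}
    (hf : HasFDerivAt ↿f f' (x, y)) : HasDerivAt (f · y) (f' (1, 0)) x :=
  (hasFDerivAt_curry_left hf).hasDerivAt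

lemma hasDerivAt_curry_right {f : E → ℝ → G} {f' : E × ℝ →L[ℝ] G} {x : E} {t : ℝ}
    (hf : HasFDerivAt ↿f f' (x, t)) : HasDerivAt (f x) (f' (0, 1)) t :=
  (hasFDerivAt_curry_right hf).hasDerivAt

lemma apply_inl_eq_zero_of_forall_eq {f : E × F → G} {f' : E × F →L[ℝ] G} {x : E} {y : F}
    (hf : HasFDerivAt f f' (x, y)) (hconst : ∀ x', f (x', y) = f (x, y)) (v : E) :
    f' (v, 0) = 0 := by
  have hleft := hasFDerivAt_curry_left (f := Function.curry f) hf
  have hzero : HasFDerivAt (fun x' => f (x', y)) (0 : E →L[ℝ] G) x := by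
    simpa only [hconst] using hasFDerivAt_const (f (x, y)) x
  simpa using congr($(hleft.unique hzero) v)

lemma apply_inr_eq_zero_of_forall_eq {f : E × F → G} {f' : E × F →L[ℝ] G} {x : E} {y : F}
    (hf : HasFDerivAt f f' (x, y)) (hconst : ∀ y', f (x, y') = f (x, y)) (v : F) :
    f' (0, v) = 0 := by
  have hright := hasFDerivAt_curry_right (f := Function.curry f) hf
  have hzero : HasFDerivAt (fun y' => f (x, y')) (0 : F →L[ℝ] G) y := by
    simpa only [hconst] using hasFDerivAt_const (f (x, y)) y
  simpa using congr($(hright.unique hzero) v)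

lemma hasFDerivAt_apply₂ {f : E → F → G} {g : H → E} {h : H → F} {g' : H →L[ℝ] E}
    {h' : H →L[ℝ] F} {u : H} (hf : DifferentiableAt ℝ ↿f (g u, h u)) (hg : HasFDerivAt g g' u)
    (hh : HasFDerivAt h h' u) :
    HasFDerivAt (fun w => f (g w) (h w))
      (fderiv ℝ (f · (h u)) (g u) ∘L g' + fderiv ℝ (f (g u)) (h u) ∘L h') u := by
  rw [(hasFDerivAt_curry_left hf.hasFDerivAt).fderiv,
    (hasFDerivAt_curry_right hf.hasFDerivAt).fderiv]
  refine (hf.hasFDerivAt.comp u (hg.prodMk hh)).congr_fderiv ?_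
  ext v
  simp [← map_add]

lemma hasFDerivAt_apply₃ {f : E → F → K → G} {g : H → E} {h : H → F} {k : H → K}
    {g' : H →L[ℝ] E} {h' : H →L[ℝ] F} {k' : H →L[ℝ] K} {u : H}
    (hf : DifferentiableAt ℝ ↿f (g u, h u, k u)) (hg : HasFDerivAt g g' u)
    (hh : HasFDerivAt h h' u) (hk : HasFDerivAt k k' u) :
    HasFDerivAt (fun w => f (g w) (h w) (k w))
      (fderiv ℝ (f · (h u) (k u)) (g u) ∘L g' + (fderiv ℝ (f (g u) · (k u)) (h u) ∘L h' +
        fderiv ℝ (f (g u) (h u)) (k u) ∘L k')) u := by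
  have hfg : DifferentiableAt ℝ ↿(f (g u)) (h u, k u) :=
    (hasFDerivAt_curry_right (f := fun x => ↿(f x)) hf.hasFDerivAt).differentiableAt
  have hpair := hfg.hasFDerivAt.comp (g := ↿(f (g u))) u (hh.prodMk hk)
  rw [(hasFDerivAt_apply₂ hfg hh hk).unique hpair]
  exact hasFDerivAt_apply₂ (f := fun x => ↿(f x)) (h := fun w => (h w, k w)) hf hg (hh.prodMk hk)

lemma hasFDerivAt_intervalIntegral_of_contDiff {f : E → ℝ → G} (hf : ContDiff ℝ 1 ↿f)
    (a b : ℝ) (u : E) :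
    HasFDerivAt (fun w => ∫ t in a..b, f w t) (∫ t in a..b, fderiv ℝ (f · t) u) u := by
  have hf' : Continuous fun z : E × ℝ => fderiv ℝ (f · z.2) z.1 :=
    (ContDiff.fderiv (f := fun (z : E × ℝ) w => f w z.2) (m := 1) (n := 0)
      (hf.comp (by fun_prop : ContDiff ℝ 1 fun q : (E × ℝ) × E => (q.2, q.1.2))) contDiff_fst
      le_rfl).continuous
  have hcont (w : E) : Continuous (f w) := hf.continuous.comp (by fun_prop : Continuous (w, ·))
  have hf'u : Continuous fun t => fderiv ℝ (f · t) u := hf'.comp (by fun_prop : Continuous (u, ·))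
  obtain ⟨B, hB⟩ :=
    isCompact_uIcc.exists_bound_of_continuousOn (hf'u.continuousOn (s := Set.uIcc a b))
  have hbound : ∀ᶠ w in 𝓝 u, ∀ t ∈ Set.uIcc a b, ‖fderiv ℝ (f · t) w‖ < B + 1 :=
    isCompact_uIcc.eventually_forall_of_forall_eventually fun t ht =>
      hf'.norm.continuousAt.eventually_lt_const ((hB t ht).trans_lt (lt_add_one B))
  refine (intervalIntegral.hasFDerivAt_integral_of_dominated_of_fderiv_le
    (F' := fun w t => fderiv ℝ (f · t) w) (bound := fun _ => B + 1) hbound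
    (.of_forall fun w => (hcont w).aestronglyMeasurable) ((hcont u).intervalIntegrable a b)
    hf'u.aestronglyMeasurable
    (.of_forall fun t ht w hw => (hw t (Set.uIoc_subset_uIcc ht)).le)
    intervalIntegrable_const (.of_forall fun t _ w _ => ?_))
  exact (hasFDerivAt_curry_left
    (hf.differentiable one_ne_zero (w, t)).hasFDerivAt).differentiableAt.hasFDerivAt

lemma hasDerivAt_fderiv_of_contDiff {s : E → ℝ → G} (hs : ContDiff ℝ 2 ↿s) (u : E) (t : ℝ) :
    HasDerivAt (fun τ => fderiv ℝ (s · τ) u) (fderiv ℝ (fun w => deriv (s w) t) u) t := by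
  have hd : Differentiable ℝ ↿s := hs.differentiable two_ne_zero
  have hs' : HasFDerivAt (fderiv ℝ ↿s) _ (u, t) :=
    ((hs.fderiv_right one_add_one_eq_two.le).differentiable one_ne_zero (u, t)).hasFDerivAt
  have hsymm : IsSymmSndFDerivAt ℝ ↿s (u, t) := hs.contDiffAt.isSymmSndFDerivAt (by simp)
  have hleft : HasDerivAt (fun τ => fderiv ℝ ↿s (u, τ) ∘L .inl ℝ E ℝ)
      (fderiv ℝ (fderiv ℝ ↿s) (u, t) (0, 1) ∘L .inl ℝ E ℝ) t := by
    simpa using (hs'.comp_hasDerivAt t ((hasDerivAt_const t u).prodMk (hasDerivAt_id t))).clm_comp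
      (hasDerivAt_const t (ContinuousLinearMap.inl ℝ E ℝ))
  have hright : HasFDerivAt (fun w => fderiv ℝ ↿s (w, t) (0, 1))
      ((fderiv ℝ (fderiv ℝ ↿s) (u, t) ∘L .inl ℝ E ℝ).flip (0, 1)) u := by
    simpa using (hs'.comp (g := fderiv ℝ ↿s) u (hasFDerivAt_prodMk_left u t)).clm_apply
      (hasFDerivAt_const _ u)
  simp only [(hasFDerivAt_curry_left (hd _).hasFDerivAt).fderiv,
    (hasDerivAt_curry_right (hd _).hasFDerivAt).deriv,
    hright.fderiv]
  convert hleft using 1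
  ext v
  exact hsymm (v, 0) (0, 1)

end Calculus

section FirstVariation

variable {P X : Type*} [NormedAddCommGroup P] [NormedSpace ℝ P]
  [NormedAddCommGroup X] [NormedSpace ℝ X]

/-- The momentum `∂ᵥℓ(γ t, γ̇ t)` conjugate to the velocity, along a curve `γ`, for a Lagrangian
`ℓ x v` on positions `x` and velocities `v`. -/
noncomputable def momentum (ℓ : X → X → ℝ) (γ : ℝ → X) (t : ℝ) : X →L[ℝ] ℝ :=
  fderiv ℝ (ℓ (γ t)) (deriv γ t)

/-- The curve `γ` solves the Euler-Lagrange equation of `ℓ` on `I`. The existence of the time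
derivative of the momentum is part of the definition. -/
def IsEulerLagrangeOn (ℓ : X → X → ℝ) (γ : ℝ → X) (I : Set ℝ) : Prop :=
  ∀ t ∈ I, HasDerivAt (momentum ℓ γ) (fderiv ℝ (ℓ · (deriv γ t)) (γ t)) t

variable {L : P → X → X → ℝ} {s : P → ℝ → X} {a b : ℝ} {u : P}

lemma contDiff_deriv_right (hs : ContDiff ℝ 2 ↿s) :
    ContDiff ℝ 1 fun z : P × ℝ => deriv (s z.1) z.2 := by
  have hs' : ContDiff ℝ 1 (fderiv ℝ ↿s) := hs.fderiv_right one_add_one_eq_two.le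
  simpa only [(hasDerivAt_curry_right (hs.differentiable two_ne_zero _).hasFDerivAt).deriv] using
    hs'.clm_apply contDiff_const

lemma contDiff_momentum (hL : ContDiff ℝ 2 ↿L) (hs : ContDiff ℝ 2 ↿s) :
    ContDiff ℝ 1 fun z : P × ℝ => momentum (L z.1) (s z.1) z.2 :=
  .fderiv (f := fun (z : P × ℝ) v => L z.1 (s z.1 z.2) v)
    (hL.comp ((contDiff_fst.comp contDiff_fst).prodMk
      ((hs.comp contDiff_fst).prodMk contDiff_snd)))
    (contDiff_deriv_right hs) one_add_one_eq_two.le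

lemma contDiff_lagrangian_comp (hL : ContDiff ℝ 1 ↿L) (hs : ContDiff ℝ 2 ↿s) :
    ContDiff ℝ 1 fun z : P × ℝ => L z.1 (s z.1 z.2) (deriv (s z.1) z.2) :=
  hL.comp (contDiff_fst.prodMk ((hs.of_le one_le_two).prodMk (contDiff_deriv_right hs)))

lemma fderiv_lagrangian_comp (hL : ContDiff ℝ 1 ↿L) (hs : ContDiff ℝ 2 ↿s) (t : ℝ) :
    fderiv ℝ (fun w => L w (s w t) (deriv (s w) t)) u =
      fderiv ℝ (fun w => L w (s u t) (deriv (s u) t)) u +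
      (fderiv ℝ (L u · (deriv (s u) t)) (s u t) ∘L fderiv ℝ (s · t) u +
        momentum (L u) (s u) t ∘L fderiv ℝ (fun w => deriv (s w) t) u) := by
  have hLd : Differentiable ℝ ↿L := hL.differentiable one_ne_zero
  have hpos : HasFDerivAt (s · t) (fderiv ℝ (s · t) u) u :=
    (hasFDerivAt_curry_left
      (hs.differentiable two_ne_zero (u, t)).hasFDerivAt).differentiableAt.hasFDerivAt
  have hvel : HasFDerivAt (fun w => deriv (s w) t) (fderiv ℝ (fun w => deriv (s w) t) u) u :=
    (hasFDerivAt_curry_left (f := fun w τ => deriv (s w) τ)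
      ((contDiff_deriv_right hs).differentiable one_ne_zero
        (u, t)).hasFDerivAt).differentiableAt.hasFDerivAt
  simpa [momentum] using (hasFDerivAt_apply₃ (hLd _) (hasFDerivAt_id u) hpos hvel).fderiv

theorem hasFDerivAt_action (hL : ContDiff ℝ 1 ↿L) (hs : ContDiff ℝ 2 ↿s)
    (hEL : IsEulerLagrangeOn (L u) (s u) (Set.uIcc a b)) :
    HasFDerivAt (fun w => ∫ t in a..b, L w (s w t) (deriv (s w) t))
      ((∫ t in a..b, fderiv ℝ (fun w => L w (s u t) (deriv (s u) t)) u) +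
        (momentum (L u) (s u) b ∘L fderiv ℝ (s · b) u -
          momentum (L u) (s u) a ∘L fderiv ℝ (s · a) u)) u := by
  have hℓ : ContDiff ℝ 1 ↿fun w t => L w (s w t) (deriv (s w) t) := contDiff_lagrangian_comp hL hs
  have hvel : ContDiff ℝ 1 (deriv (s u)) :=
    (contDiff_deriv_right hs).comp (contDiff_prodMk_right u)
  have hpos : ContDiff ℝ 1 (s u) := (hs.of_le one_le_two).comp (contDiff_prodMk_right u)
  have htotal : Continuous fun t => fderiv ℝ (fun w => L w (s w t) (deriv (s w) t)) u :=
    .fderiv_one (f := fun t w => L w (s w t) (deriv (s w) t))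
      (hℓ.comp (contDiff_snd.prodMk contDiff_fst)) continuous_const
  have hexplicit : Continuous fun t => fderiv ℝ (fun w => L w (s u t) (deriv (s u) t)) u :=
    .fderiv_one (f := fun t w => L w (s u t) (deriv (s u) t))
      (hL.comp (contDiff_snd.prodMk ((hpos.comp contDiff_fst).prodMk (hvel.comp contDiff_fst))))
      continuous_const
  have hboundary : ∀ t ∈ Set.uIcc a b, HasDerivAt
      (fun t => momentum (L u) (s u) t ∘L fderiv ℝ (s · t) u)
      (fderiv ℝ (fun w => L w (s w t) (deriv (s w) t)) u -
        fderiv ℝ (fun w => L w (s u t) (deriv (s u) t)) u) t := fun t ht => by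
    rw [fderiv_lagrangian_comp hL hs, add_sub_cancel_left]
    exact (hEL t ht).clm_comp (hasDerivAt_fderiv_of_contDiff hs u t)
  refine (hasFDerivAt_intervalIntegral_of_contDiff hℓ a b u).congr_fderiv ?_
  rw [← intervalIntegral.integral_eq_sub_of_hasDerivAt hboundary
      ((htotal.sub hexplicit).intervalIntegrable a b),
    intervalIntegral.integral_sub (htotal.intervalIntegrable a b)
      (hexplicit.intervalIntegrable a b), add_sub_cancel]

theorem momentum_reciprocity (hL : ContDiff ℝ 1 ↿L) (hs : ContDiff ℝ 2 ↿s)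
    (hEL : ∀ w, IsEulerLagrangeOn (L w) (s w) (Set.uIcc a b)) {I' : P →L[ℝ] P →L[ℝ] ℝ}
    {pa' pb' : P →L[ℝ] X →L[ℝ] ℝ}
    (hI : HasFDerivAt
      (fun w => ∫ t in a..b, fderiv ℝ (fun w' => L w' (s w t) (deriv (s w) t)) w) I' u)
    (hpa : HasFDerivAt (fun w => momentum (L w) (s w) a) pa' u)
    (hpb : HasFDerivAt (fun w => momentum (L w) (s w) b) pb' u) (x y : P) :
    I' x y + (pb' x (fderiv ℝ (s · b) u y) - pa' x (fderiv ℝ (s · a) u y)) =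
      I' y x + (pb' y (fderiv ℝ (s · b) u x) - pa' y (fderiv ℝ (s · a) u x)) := by
  have hst (t : ℝ) : ContDiff ℝ 2 (s · t) := hs.comp (contDiff_prodMk_left t)
  have hsens (t : ℝ) : HasFDerivAt (fderiv ℝ (s · t)) (fderiv ℝ (fderiv ℝ (s · t)) u) u :=
    (((hst t).fderiv_right one_add_one_eq_two.le).differentiable one_ne_zero u).hasFDerivAt
  have hsymm (t : ℝ) : fderiv ℝ (fderiv ℝ (s · t)) u x y = fderiv ℝ (fderiv ℝ (s · t)) u y x :=
    (hst t).contDiffAt.isSymmSndFDerivAt (by simp) x y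
  have haction := second_derivative_symmetric (fun w => hasFDerivAt_action hL hs (hEL w))
    (hI.add ((hpb.clm_comp (hsens b)).sub (hpa.clm_comp (hsens a)))) x y
  simp only [add_apply, sub_apply, ContinuousLinearMap.comp_apply, ContinuousLinearMap.compL_apply,
    ContinuousLinearMap.flip_apply, hsymm] at haction
  linarith

end FirstVariation

section AugmentedLagrangian

/-- The augmented Lagrangian `L_β(x, v, θ) = L₀(x, v, θ) + β c(x)`, as a family of Lagrangians
indexed by the joint parameter `(β, θ)`. -/
def augmentedLagrangian {X E : Type*} (L₀ : X → X → E → ℝ) (c : X → ℝ) (w : ℝ × E) (x v : X) : ℝ :=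
  L₀ x v w.2 + w.1 * c x

lemma momentum_augmentedLagrangian {X E : Type*} [NormedAddCommGroup X] [NormedSpace ℝ X]
    (L₀ : X → X → E → ℝ) (c : X → ℝ) (w : ℝ × E) (γ : ℝ → X) :
    momentum (augmentedLagrangian L₀ c w) γ = momentum (L₀ · · w.2) γ :=
  funext fun _ => fderiv_add_const _

lemma fderiv_augmentedLagrangian_param {X E : Type*} [NormedAddCommGroup E] [NormedSpace ℝ E]
    {L₀ : X → X → E → ℝ} {c : X → ℝ} {x v : X} {w : ℝ × E}
    (hL₀ : DifferentiableAt ℝ (L₀ x v) w.2) :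
    fderiv ℝ (fun w' => augmentedLagrangian L₀ c w' x v) w =
      c x • .fst ℝ ℝ E + fderiv ℝ (L₀ x v) w.2 ∘L .snd ℝ ℝ E := by
  rw [add_comm]
  exact ((hL₀.hasFDerivAt.comp w hasFDerivAt_snd).add (hasFDerivAt_fst.mul_const (c x))).fderiv

variable {X E : Type*} [NormedAddCommGroup X] [NormedSpace ℝ X]
  [NormedAddCommGroup E] [NormedSpace ℝ E]
  {L₀ : X → X → E → ℝ} {c : X → ℝ} {s : ℝ × E → ℝ → X} {a b : ℝ} {u : ℝ × E}

lemma contDiff_augmentedLagrangian {n : WithTop ℕ∞} (hL₀ : ContDiff ℝ n ↿L₀)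
    (hc : ContDiff ℝ n c) : ContDiff ℝ n ↿(augmentedLagrangian L₀ c) :=
  (hL₀.comp (by fun_prop : ContDiff ℝ n fun q : (ℝ × E) × X × X => (q.2.1, q.2.2, q.1.2))).add
    ((by fun_prop : ContDiff ℝ n fun q : (ℝ × E) × X × X => q.1.1).mul
      (hc.comp (by fun_prop : ContDiff ℝ n fun q : (ℝ × E) × X × X => q.2.1)))

lemma contDiff_fderiv_param (hL₀ : ContDiff ℝ 2 ↿L₀) :
    ContDiff ℝ 1 fun q : X × X × E => fderiv ℝ (L₀ q.1 q.2.1) q.2.2 :=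
  .fderiv (f := fun (q : X × X × E) η => L₀ q.1 q.2.1 η)
    (hL₀.comp (by fun_prop : ContDiff ℝ 2 fun r : (X × X × E) × E => (r.1.1, r.1.2.1, r.2)))
    (by fun_prop) one_add_one_eq_two.le

lemma differentiableAt_fderiv_velocity (hL₀ : ContDiff ℝ 2 ↿L₀) (x v : X) (θ : E) :
    DifferentiableAt ℝ (fun θ' => fderiv ℝ (L₀ x · θ') v) θ :=
  (ContDiff.fderiv (f := fun η v => L₀ x v η)
    (hL₀.comp (by fun_prop : ContDiff ℝ 2 fun q : E × X => (x, q.2, q.1))) contDiff_const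
    one_add_one_eq_two.le).differentiable one_ne_zero θ

lemma contDiff_momentum_param (hL₀ : ContDiff ℝ 2 ↿L₀) (hs : ContDiff ℝ 2 ↿s) :
    ContDiff ℝ 1 fun z : (ℝ × E) × ℝ => momentum (L₀ · · z.1.2) (s z.1) z.2 :=
  contDiff_momentum (L := fun (w : ℝ × E) x v => L₀ x v w.2) (hL₀.comp (by fun_prop :
    ContDiff ℝ 2 fun q : (ℝ × E) × X × X => (q.2.1, q.2.2, q.1.2))) hs

lemma differentiable_momentum_param (hL₀ : ContDiff ℝ 2 ↿L₀) (hs : ContDiff ℝ 2 ↿s) (t : ℝ) :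
    Differentiable ℝ fun w => momentum (L₀ · · w.2) (s w) t :=
  ((contDiff_momentum_param hL₀ hs).comp (contDiff_prodMk_left t)).differentiable one_ne_zero

lemma contDiff_fderiv_param_comp (hL₀ : ContDiff ℝ 2 ↿L₀) (hs : ContDiff ℝ 2 ↿s) :
    ContDiff ℝ 1 fun z : (ℝ × E) × ℝ =>
      fderiv ℝ (L₀ (s z.1 z.2) (deriv (s z.1) z.2)) z.1.2 :=
  (contDiff_fderiv_param hL₀).comp ((hs.of_le one_le_two).prodMk
    ((contDiff_deriv_right hs).prodMk (contDiff_snd.comp contDiff_fst)))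

lemma integral_fderiv_augmentedLagrangian_param (hL₀ : ContDiff ℝ 2 ↿L₀) (hc : Continuous c)
    {γ v : ℝ → X} (hγ : Continuous γ) (hv : Continuous v) (w : ℝ × E) :
    ∫ t in a..b, fderiv ℝ (fun w' => augmentedLagrangian L₀ c w' (γ t) (v t)) w =
      (∫ t in a..b, c (γ t)) • .fst ℝ ℝ E +
        (∫ t in a..b, fderiv ℝ (L₀ (γ t) (v t)) w.2) ∘L .snd ℝ ℝ E := by
  have hL₀θ (x v : X) : DifferentiableAt ℝ (L₀ x v) w.2 :=
    (hL₀.comp (by fun_prop : ContDiff ℝ 2 fun η => (x, v, η))).differentiable two_ne_zero _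
  have hexplicit : Continuous fun t => fderiv ℝ (L₀ (γ t) (v t)) w.2 :=
    (contDiff_fderiv_param hL₀).continuous.comp (hγ.prodMk (hv.prodMk continuous_const))
  have hcost_fst : Continuous fun t => c (γ t) • ContinuousLinearMap.fst ℝ ℝ E :=
    (hc.comp hγ).smul continuous_const
  have hexplicit_snd : Continuous fun t =>
      fderiv ℝ (L₀ (γ t) (v t)) w.2 ∘L ContinuousLinearMap.snd ℝ ℝ E :=
    hexplicit.clm_comp continuous_const
  simp only [fderiv_augmentedLagrangian_param (hL₀θ _ _)]
  rw [intervalIntegral.integral_add (hcost_fst.intervalIntegrable a b)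
    (hexplicit_snd.intervalIntegrable a b), intervalIntegral.integral_smul_const]
  congr 1
  exact ((ContinuousLinearMap.compL ℝ (ℝ × E) E ℝ).flip (.snd ℝ ℝ E)).intervalIntegral_comp_comm
    (hexplicit.intervalIntegrable a b)

theorem cost_momentum_reciprocity (hL₀ : ContDiff ℝ 2 ↿L₀) (hc : ContDiff ℝ 1 c)
    (hs : ContDiff ℝ 2 ↿s)
    (hEL : ∀ w, IsEulerLagrangeOn (augmentedLagrangian L₀ c w) (s w) (Set.uIcc a b))
    {cost' : ℝ × E →L[ℝ] ℝ} {expl' : ℝ × E →L[ℝ] E →L[ℝ] ℝ} {pa' pb' : ℝ × E →L[ℝ] X →L[ℝ] ℝ}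
    (hcost : HasFDerivAt (fun w => ∫ t in a..b, c (s w t)) cost' u)
    (hexpl : HasFDerivAt (fun w => ∫ t in a..b, fderiv ℝ (L₀ (s w t) (deriv (s w) t)) w.2) expl' u)
    (hpa : HasFDerivAt (fun w => momentum (L₀ · · w.2) (s w) a) pa' u)
    (hpb : HasFDerivAt (fun w => momentum (L₀ · · w.2) (s w) b) pb' u) (e : E) :
    cost' (0, e) + (pb' (0, e) (fderiv ℝ (s · b) u (1, 0)) -
        pa' (0, e) (fderiv ℝ (s · a) u (1, 0))) =
      expl' (1, 0) e + (pb' (1, 0) (fderiv ℝ (s · b) u (0, e)) -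
        pa' (1, 0) (fderiv ℝ (s · a) u (0, e))) := by
  have hL : ContDiff ℝ 1 ↿(augmentedLagrangian L₀ c) :=
    contDiff_augmentedLagrangian (hL₀.of_le one_le_two) hc
  have hγ (w : ℝ × E) : Continuous (s w) := hs.continuous.comp (.prodMk_right w)
  have hv (w : ℝ × E) : Continuous (deriv (s w)) :=
    (contDiff_deriv_right hs).continuous.comp (.prodMk_right w)
  have hI := (hcost.smul_const (ContinuousLinearMap.fst ℝ ℝ E)).add
    (hexpl.clm_comp (hasFDerivAt_const (ContinuousLinearMap.snd ℝ ℝ E) u))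
  simp only [← momentum_augmentedLagrangian L₀ c] at hpa hpb
  simpa using momentum_reciprocity hL hs hEL
    (hI.congr_of_eventuallyEq (.of_forall fun w =>
      integral_fderiv_augmentedLagrangian_param hL₀ hc.continuous (hγ w) (hv w) w))
    hpa hpb (0, e) (1, 0)

variable {θ : E}

theorem cost_apply_eq_of_fixed_boundary (hL₀ : ContDiff ℝ 2 ↿L₀) (hc : ContDiff ℝ 1 c)
    (hs : ContDiff ℝ 2 ↿s)
    (hEL : ∀ w, IsEulerLagrangeOn (augmentedLagrangian L₀ c w) (s w) (Set.uIcc a b))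
    (hfinal : ∀ β, s (β, θ) b = s (0, θ) b ∧ deriv (s (β, θ)) b = deriv (s (0, θ)) b)
    (hinit : ∀ θ', s (0, θ') a = s (0, θ) a)
    {cost' : ℝ × E →L[ℝ] ℝ} {expl' : ℝ × E →L[ℝ] E →L[ℝ] ℝ} {pa' : ℝ × E →L[ℝ] X →L[ℝ] ℝ}
    (hcost : HasFDerivAt (fun w => ∫ t in a..b, c (s w t)) cost' (0, θ))
    (hexpl : HasFDerivAt (fun w => ∫ t in a..b, fderiv ℝ (L₀ (s w t) (deriv (s w) t)) w.2) expl'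
      (0, θ))
    (hpa : HasFDerivAt (fun w => momentum (L₀ · · w.2) (s w) a) pa' (0, θ)) (e : E) :
    cost' (0, e) = expl' (1, 0) e + pa' (0, e) (fderiv ℝ (s · a) (0, θ) (1, 0)) := by
  have hst (t : ℝ) : HasFDerivAt (s · t) (fderiv ℝ (s · t) (0, θ)) (0, θ) :=
    ((hs.comp (contDiff_prodMk_left t)).differentiable two_ne_zero _).hasFDerivAt
  have hpb := (differentiable_momentum_param hL₀ hs b (0, θ)).hasFDerivAt
  have hpb_β := apply_inl_eq_zero_of_forall_eq hpb (fun β => by simp only [momentum, hfinal β]) 1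
  have hsb_β := apply_inl_eq_zero_of_forall_eq (hst b) (fun β => (hfinal β).1) 1
  have hsa_θ := apply_inr_eq_zero_of_forall_eq (hst a) hinit e
  have hrecip := cost_momentum_reciprocity hL₀ hc hs hEL hcost hexpl hpa hpb e
  simp only [hpb_β, hsb_β, hsa_θ, map_zero, zero_apply, zero_sub, sub_zero, add_zero] at hrecip
  exact eq_add_of_sub_eq hrecip

theorem hasDerivAt_pfvp (hL₀ : ContDiff ℝ 2 ↿L₀) (hc : ContDiff ℝ 1 c) (hs : ContDiff ℝ 2 ↿s)
    (hEL : ∀ w, IsEulerLagrangeOn (augmentedLagrangian L₀ c w) (s w) (Set.uIcc a b))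
    (hfinal : ∀ β, s (β, θ) b = s (0, θ) b ∧ deriv (s (β, θ)) b = deriv (s (0, θ)) b)
    (hinit : ∀ θ', s (0, θ') a = s (0, θ) a) :
    HasDerivAt
      (fun β => (∫ t in a..b, fderiv ℝ (L₀ (s (β, θ) t) (deriv (s (β, θ)) t)) θ) +
        (fderiv ℝ (fun θ' => momentum (L₀ · · θ') (s (0, θ')) a) θ).flip (s (β, θ) a))
      (fderiv ℝ (fun θ' => ∫ t in a..b, c (s (0, θ') t)) θ) 0 := by
  have hcost := hasFDerivAt_intervalIntegral_of_contDiff (f := fun w t => c (s w t))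
    (hc.comp (hs.of_le one_le_two)) a b (0, θ)
  have hexpl := hasFDerivAt_intervalIntegral_of_contDiff
    (f := fun w t => fderiv ℝ (L₀ (s w t) (deriv (s w) t)) w.2)
    (contDiff_fderiv_param_comp hL₀ hs) a b (0, θ)
  have hpa := (differentiable_momentum_param hL₀ hs a (0, θ)).hasFDerivAt
  have hsa := ((hs.comp (contDiff_prodMk_left a)).differentiable two_ne_zero (0, θ)).hasFDerivAt
  have hcost_θ := (hasFDerivAt_curry_right
    (f := fun β η => ∫ t in a..b, c (s (β, η) t)) hcost).fderiv
  have hpa_θ := (hasFDerivAt_curry_right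
    (f := fun β η => momentum (L₀ · · η) (s (β, η)) a) hpa).fderiv
  have hexpl_β := hasDerivAt_curry_left
    (f := fun β η => ∫ t in a..b, fderiv ℝ (L₀ (s (β, η) t) (deriv (s (β, η)) t)) η) hexpl
  have hsa_β := hasDerivAt_curry_left (f := fun β η => s (β, η) a) hsa
  rw [hcost_θ, hpa_θ]
  refine (hexpl_β.add ((ContinuousLinearMap.hasFDerivAt _).comp_hasDerivAt (0 : ℝ)
    hsa_β)).congr_deriv (ContinuousLinearMap.ext fun e => ?_)
  exact (cost_apply_eq_of_fixed_boundary hL₀ hc hs hEL hfinal hinit hcost hexpl hpa e).symm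

end AugmentedLagrangian

section Gradient

variable {X : Type*} [NormedAddCommGroup X] [InnerProductSpace ℝ X] [CompleteSpace X]

lemma hasDerivAt_momentum_of_gradient_eq {ℓ : X → X → ℝ} {γ : ℝ → X} {t : ℝ}
    (hp : DifferentiableAt ℝ (momentum ℓ γ) t)
    (hEL : gradient (ℓ · (deriv γ t)) (γ t) =
      deriv (fun τ => gradient (ℓ (γ τ)) (deriv γ τ)) t) :
    HasDerivAt (momentum ℓ γ) (fderiv ℝ (ℓ · (deriv γ t)) (γ t)) t := by
  have hgradient : deriv (fun τ => gradient (ℓ (γ τ)) (deriv γ τ)) t =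
      (InnerProductSpace.toDual ℝ X).symm (deriv (momentum ℓ γ) t) :=
    ((InnerProductSpace.toDual ℝ X).symm.toContinuousLinearEquiv.hasFDerivAt.comp_hasDerivAt t
      hp.hasDerivAt).deriv
  rw [(InnerProductSpace.toDual ℝ X).symm.injective (hEL.trans hgradient)]
  exact hp.hasDerivAt

lemma isEulerLagrangeOn_augmentedLagrangian_of_gradient_eq {E : Type*} {L₀ : X → X → E → ℝ}
    {c : X → ℝ} {γ : ℝ → X} {I : Set ℝ} {w : ℝ × E}
    (hp : Differentiable ℝ (momentum (L₀ · · w.2) γ))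
    (hL₀ : ∀ v, Differentiable ℝ (L₀ · v w.2)) (hc : Differentiable ℝ c)
    (hEL : ∀ t ∈ I, gradient (L₀ · (deriv γ t) w.2) (γ t) + w.1 • gradient c (γ t) =
      deriv (fun τ => gradient (L₀ (γ τ) · w.2) (deriv γ τ)) t) :
    IsEulerLagrangeOn (augmentedLagrangian L₀ c w) γ I := fun t ht => by
  have hforce : gradient (augmentedLagrangian L₀ c w · (deriv γ t)) (γ t) =
      gradient (L₀ · (deriv γ t) w.2) (γ t) + w.1 • gradient c (γ t) := by
    simp only [gradient, ← map_smul, ← map_add]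
    exact congrArg _ ((hL₀ _ _).hasFDerivAt.add ((hc _).hasFDerivAt.const_mul w.1)).fderiv
  have hvelocity (τ : ℝ) : gradient (augmentedLagrangian L₀ c w (γ τ)) (deriv γ τ) =
      gradient (L₀ (γ τ) · w.2) (deriv γ τ) :=
    congrArg _ (congrFun (momentum_augmentedLagrangian L₀ c w γ) τ)
  refine hasDerivAt_momentum_of_gradient_eq ?_ ?_
  · rw [momentum_augmentedLagrangian]
    exact hp t
  · simp only [hforce, hvelocity, hEL t ht]

variable {E : Type*} [NormedAddCommGroup E] [InnerProductSpace ℝ E] [CompleteSpace E]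

lemma gradient_add_const (f : E → ℝ) (r : ℝ) (θ : E) :
    gradient (fun θ' => f θ' + r) θ = gradient f θ :=
  congrArg _ (fderiv_add_const r)

lemma gradient_inner_gradient {ℓ : X → E → ℝ} {v : X} {θ : E}
    (hℓ : DifferentiableAt ℝ (fun θ' => fderiv ℝ (ℓ · θ') v) θ) (x : X) :
    gradient (fun θ' => ⟪gradient (ℓ · θ') v, x⟫) θ =
      (InnerProductSpace.toDual ℝ E).symm
        ((fderiv ℝ (fun θ' => fderiv ℝ (ℓ · θ') v) θ).flip x) := by
  simp only [inner_gradient_left]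
  exact congrArg _ (by simpa using (hℓ.hasFDerivAt.clm_apply (hasFDerivAt_const x θ)).fderiv)

lemma intervalIntegral_gradient {f : ℝ → E → ℝ} {a b : ℝ} {θ : E}
    (hf : IntervalIntegrable (fun t => fderiv ℝ (f t) θ) MeasureTheory.volume a b) :
    ∫ t in a..b, gradient (f t) θ =
      (InnerProductSpace.toDual ℝ E).symm (∫ t in a..b, fderiv ℝ (f t) θ) :=
  (InnerProductSpace.toDual ℝ E).symm.toContinuousLinearEquiv.toContinuousLinearMap
    |>.intervalIntegral_comp_comm hf

theorem hasDerivAt_pfvp_gradient {L₀ : X → X → E → ℝ} {c : X → ℝ} {s : ℝ × E → ℝ → X} {a b : ℝ}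
    {θ : E} (hL₀ : ContDiff ℝ 2 ↿L₀) (hc : ContDiff ℝ 1 c) (hs : ContDiff ℝ 2 ↿s)
    (hEL : ∀ w, IsEulerLagrangeOn (augmentedLagrangian L₀ c w) (s w) (Set.uIcc a b))
    (hfinal : ∀ β, s (β, θ) b = s (0, θ) b ∧ deriv (s (β, θ)) b = deriv (s (0, θ)) b)
    (hinit : ∀ θ', s (0, θ') a = s (0, θ) a ∧ deriv (s (0, θ')) a = deriv (s (0, θ)) a) :
    HasDerivAt
      (fun β => (∫ t in a..b, gradient (L₀ (s (β, θ) t) (deriv (s (β, θ)) t)) θ) +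
        gradient (fun θ' => ⟪gradient (L₀ (s (0, θ) a) · θ') (deriv (s (0, θ)) a), s (β, θ) a⟫) θ)
      (gradient (fun θ' => ∫ t in a..b, c (s (0, θ') t)) θ) 0 := by
  have hpa : (fun θ' => momentum (L₀ · · θ') (s (0, θ')) a) =
      fun θ' => fderiv ℝ (L₀ (s (0, θ) a) · θ') (deriv (s (0, θ)) a) :=
    funext fun θ' => by simp only [momentum, hinit θ']
  have hpa_diff : DifferentiableAt ℝ
      (fun θ' => fderiv ℝ (L₀ (s (0, θ) a) · θ') (deriv (s (0, θ)) a)) θ :=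
    differentiableAt_fderiv_velocity hL₀ _ _ _
  have hint (β : ℝ) : Continuous fun t => fderiv ℝ (L₀ (s (β, θ) t) (deriv (s (β, θ)) t)) θ :=
    (contDiff_fderiv_param_comp hL₀ hs).continuous.comp (.prodMk_right (β, θ))
  have hdual := hasDerivAt_pfvp hL₀ hc hs hEL hfinal fun θ' => (hinit θ').1
  rw [hpa] at hdual
  simp only [intervalIntegral_gradient ((hint _).intervalIntegrable a b),
    gradient_inner_gradient hpa_diff, ← map_add]
  exact (InnerProductSpace.toDual ℝ E).symm.toContinuousLinearEquiv.hasFDerivAt.comp_hasDerivAt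
    (0 : ℝ) hdual

theorem pfvp_gradient_estimator_general (a b : ℝ) {L₀ : X → X → E → ℝ} (hL₀ : ContDiff ℝ 2 ↿L₀)
    {c : X → ℝ} (hc : ContDiff ℝ 1 c) {S : ℝ → E → ℝ → X} (hS : ContDiff ℝ 2 ↿S)
    (hEL : ∀ (β : ℝ) (θ : E), ∀ t ∈ Set.uIcc a b,
      gradient (fun x => L₀ x (deriv (S β θ) t) θ) (S β θ t) + β • gradient c (S β θ t) =
        deriv (fun τ => gradient (fun v => L₀ (S β θ τ) v θ) (deriv (S β θ) τ)) t)
    {θ : E} (hfinal : ∀ β, S β θ b = S 0 θ b ∧ deriv (S β θ) b = deriv (S 0 θ) b)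
    (hinit : ∀ θ', S 0 θ' a = S 0 θ a ∧ deriv (S 0 θ') a = deriv (S 0 θ) a)
    {C : E → ℝ} (hC : ∀ θ', C θ' = ∫ t in a..b, c (S 0 θ' t)) :
    Filter.Tendsto
      (fun β : ℝ =>
        β⁻¹ •
          ((∫ t in a..b,
              (gradient (fun θ' => L₀ (S β θ t) (deriv (S β θ) t) θ' + β * c (S β θ t)) θ
                - gradient (fun θ' => L₀ (S 0 θ t) (deriv (S 0 θ) t) θ') θ))
            + gradient (fun θ' =>
                ⟪gradient (fun v => L₀ (S 0 θ a) v θ') (deriv (S 0 θ) a),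
                  S β θ a - S 0 θ a⟫) θ))
      (𝓝[≠] (0 : ℝ)) (𝓝 (gradient C θ)) := by
  let s : ℝ × E → ℝ → X := fun w => S w.1 w.2
  have hs : ContDiff ℝ 2 ↿s :=
    hS.comp (by fun_prop : ContDiff ℝ 2 fun z : (ℝ × E) × ℝ => (z.1.1, z.1.2, z.2))
  have hp (w : ℝ × E) : Differentiable ℝ (momentum (L₀ · · w.2) (s w)) :=
    ((contDiff_momentum_param hL₀ hs).comp (contDiff_prodMk_right w)).differentiable one_ne_zero
  have hL₀x (v : X) (θ : E) : Differentiable ℝ (L₀ · v θ) :=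
    (hL₀.comp (by fun_prop : ContDiff ℝ 2 fun x => (x, v, θ))).differentiable two_ne_zero
  have hELs (w : ℝ × E) : IsEulerLagrangeOn (augmentedLagrangian L₀ c w) (s w) (Set.uIcc a b) :=
    isEulerLagrangeOn_augmentedLagrangian_of_gradient_eq (hp w) (hL₀x · w.2)
      (hc.differentiable one_ne_zero) (hEL w.1 w.2)
  have hint (β : ℝ) : IntervalIntegrable
      (fun t => gradient (L₀ (s (β, θ) t) (deriv (s (β, θ)) t)) θ) MeasureTheory.volume a b :=
    ((InnerProductSpace.toDual ℝ E).symm.continuous.comp ((contDiff_fderiv_param_comp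
      hL₀ hs).continuous.comp (.prodMk_right (β, θ)))).intervalIntegrable a b
  rw [funext hC]
  refine (hasDerivAt_pfvp_gradient hL₀ hc hs hELs hfinal hinit).tendsto_slope.congr fun β => ?_
  simp only [slope, vsub_eq_sub, sub_zero, gradient_add_const,
    gradient_inner_gradient (differentiableAt_fderiv_velocity hL₀ _ _ _), map_sub]
  rw [intervalIntegral.integral_sub (hint β) (hint 0), add_sub_add_comm]

end Gradient

/-- PFVP gradient estimator of Generalized Lagrangian Equilibrium
Propagation. If the nudged Euler-Lagrange trajectories of the augmented Lagrangian
`L_β = L₀ + β c` share their final position and velocity with the free trajectory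
(β-independence at `t = T`), and the free trajectory's initial position and velocity
are independent of `θ`, then the gradient of the cost is the `β → 0` limit of the
PFVP finite-difference estimator. -/
theorem pfvp_gradient_estimator
    {d k : ℕ} (T : ℝ) (hT : 0 < T)
    (L₀ : EuclideanSpace ℝ (Fin d) → EuclideanSpace ℝ (Fin d) → EuclideanSpace ℝ (Fin k) → ℝ)
    (hL₀ : ContDiff ℝ 2 (fun q : (EuclideanSpace ℝ (Fin d) × EuclideanSpace ℝ (Fin d))
        × EuclideanSpace ℝ (Fin k) => L₀ q.1.1 q.1.2 q.2))
    (c : EuclideanSpace ℝ (Fin d) → ℝ) (hc : ContDiff ℝ 2 c)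
    (S : ℝ → EuclideanSpace ℝ (Fin k) → ℝ → EuclideanSpace ℝ (Fin d))
    (hS : ContDiff ℝ 2 (fun q : ℝ × EuclideanSpace ℝ (Fin k) × ℝ => S q.1 q.2.1 q.2.2))
    -- each curve solves the Euler-Lagrange equation of the augmented Lagrangian L_β:
    (hEL : ∀ (β : ℝ) (θ : EuclideanSpace ℝ (Fin k)), ∀ t ∈ Set.Icc (0:ℝ) T,
      gradient (fun a => L₀ a (deriv (S β θ) t) θ) (S β θ t) + β • gradient c (S β θ t)
        = deriv (fun τ => gradient (fun w => L₀ (S β θ τ) w θ) (deriv (S β θ) τ)) t)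
    -- (ii) final position and velocity are independent of β:
    (hfinal : ∀ (β : ℝ) (θ : EuclideanSpace ℝ (Fin k)),
      S β θ T = S 0 θ T ∧ deriv (S β θ) T = deriv (S 0 θ) T)
    -- (iii) the free trajectory's initial position and velocity are independent of θ:
    (hinit : ∀ θ θ' : EuclideanSpace ℝ (Fin k),
      S 0 θ 0 = S 0 θ' 0 ∧ deriv (S 0 θ) 0 = deriv (S 0 θ') 0)
    (C : EuclideanSpace ℝ (Fin k) → ℝ)
    (hC : ∀ θ, C θ = ∫ t in (0:ℝ)..T, c (S 0 θ t))
    (θ : EuclideanSpace ℝ (Fin k)) :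
    Filter.Tendsto
      (fun β : ℝ =>
        β⁻¹ •
          ((∫ t in (0:ℝ)..T,
              (gradient (fun θ' => L₀ (S β θ t) (deriv (S β θ) t) θ' + β * c (S β θ t)) θ
                - gradient (fun θ' => L₀ (S 0 θ t) (deriv (S 0 θ) t) θ') θ))
            + gradient (fun θ' =>
                ⟪gradient (fun w => L₀ (S 0 θ 0) w θ') (deriv (S 0 θ) 0),
                  S β θ 0 - S 0 θ 0⟫) θ))
      (𝓝[≠] (0:ℝ)) (𝓝 (gradient C θ)) :=
  pfvp_gradient_estimator_general 0 T (hL₀.comp contDiff_prodAssoc_symm) (hc.of_le one_le_two) hS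
    (by rwa [Set.uIcc_of_le hT.le]) (hfinal · θ) (hinit · θ) hC
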